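/- Assume char(F) = 3 and d ≥ 8. If u ∈ M is a word with deg_{x_i}(u) = 3 for every 1 ≤ i ≤ 8, then u = 0 in A_{3,d}. -/

import Mathlib

open FreeAlgebra MulOpposite

/-- The alphabet: `(k, false)` is the letter `x_{k+1}`, `(k, true)` is `x_{k+1}ᵀ`. -/
abbrev Ltr (d : ℕ) := Fin d × Bool

/-- The free (unital) associative algebra on the `2d` letters.  The free non-unital
algebra `M_F` sits inside it as the span of the nonempty words. -/
abbrev FA (F : Type) [Field F] (d : ℕ) := FreeAlgebra F (Ltr d)

variable (F : Type) [Field F] (d : ℕ)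

/-- The word in the free algebra corresponding to a list of letters
(the empty list gives `1`, the unit). -/
def wordOf (l : List (Ltr d)) : FA F d := (l.map (FreeAlgebra.ι F)).prod

/-- The transpose: the linear anti-automorphism with `x ↦ xᵀ`, `xᵀ ↦ x`. -/
def tp (a : FA F d) : FA F d :=
  ((FreeAlgebra.lift F fun p : Ltr d => op (FreeAlgebra.ι F (p.1, !p.2))) a).unop

/-- `ā = a - aᵀ`. -/
def bar (a : FA F d) : FA F d := a - tp F d a

/-- `T(a,b,c) = a b̄ c̄ + b̄ aᵀ c̄ + b̄ c̄ a`. -/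
def Trel (a b c : FA F d) : FA F d :=
  a * bar F d b * bar F d c + bar F d b * tp F d a * bar F d c + bar F d b * bar F d c * a

/-- The copy of the free non-unital algebra `M_F`, i.e. the span of the nonempty words. -/
def MFsub : Submodule F (FA F d) :=
  Submodule.span F {w | ∃ l : List (Ltr d), l ≠ [] ∧ w = wordOf F d l}

/-- The two-sided ideal such that `A_{3,d} = M_F / (idealA ∩ M_F)`: it is generated by
`a³` for `a ∈ M_F` together with `T(a,b,c)` for `a, b, c ∈ M_F`.  (Since all generators lie in
`M_F`, its intersection with `M_F` is exactly the two-sided ideal of the non-unital algebra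
`M_F` generated by these elements; in fact it is contained in `M_F`.)
An element `u ∈ M_F` is zero in `A_{3,d}` iff `u ∈ idealA F d`. -/
def idealA : TwoSidedIdeal (FA F d) :=
  TwoSidedIdeal.span
    ({x | ∃ a ∈ MFsub F d, x = a ^ 3} ∪
     {x | ∃ a ∈ MFsub F d, ∃ b ∈ MFsub F d, ∃ c ∈ MFsub F d, x = Trel F d a b c})

section Abstract

variable {d : ℕ} {R : Type*} [Ring R] (X : Ltr d → R)

/-- value of a word -/
def vl (l : List (Ltr d)) : R := (l.map X).prod

/-- transpose of a word -/
def tr (l : List (Ltr d)) : List (Ltr d) := (l.map fun p => (p.1, !p.2)).reverse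

/-- bar of a word -/
def br (l : List (Ltr d)) : R := vl X l - vl X (tr l)

/-- degree of a word -/
def dg (l : List (Ltr d)) : Multiset (Fin d) := ((l.map Prod.fst : List (Fin d)) : Multiset (Fin d))

theorem tr_tr (l : List (Ltr d)) : tr (tr l) = l := by
  simp [tr, Function.comp_def]

theorem tr_append (l m : List (Ltr d)) : tr (l ++ m) = tr m ++ tr l := by
  simp [tr]

theorem dg_append (l m : List (Ltr d)) : dg (l ++ m) = dg l + dg m := by
  simp [dg]

theorem dg_cons (y : Ltr d) (m : List (Ltr d)) : dg (y :: m) = {y.1} + dg m := by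
  simp [dg]

theorem dg_nil : dg ([] : List (Ltr d)) = 0 := by
  simp [dg]

theorem dg_tr (l : List (Ltr d)) : dg (tr l) = dg l := by
  simp [dg, tr, Function.comp_def]

theorem vl_append (l m : List (Ltr d)) : vl X (l ++ m) = vl X l * vl X m := by
  simp [vl]

theorem vl_cons (y : Ltr d) (m : List (Ltr d)) : vl X (y :: m) = X y * vl X m := by
  simp [vl]

theorem vl_nil : vl X ([] : List (Ltr d)) = 1 := by
  simp [vl]

/-- generators -/
inductive Gen : ℕ → Multiset (Fin d) → R → Prop
  | one : Gen 0 0 1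
  | ltr {k : ℕ} {μ : Multiset (Fin d)} {r : R} (y : Ltr d) (h : Gen k μ r) :
      Gen k ({y.1} + μ) (X y * r)
  | bar {k : ℕ} {μ : Multiset (Fin d)} {r : R} (w : List (Ltr d)) (hw : w.length ≤ 2)
      (h : Gen k μ r) : Gen (k + 1) (dg w + μ) (br X w * r)

/-- the filtration -/
def GG (k : ℕ) (μ : Multiset (Fin d)) : AddSubgroup R := AddSubgroup.closure {r | Gen X k μ r}

variable {X}

theorem Gen.mul {k k' : ℕ} {μ μ' : Multiset (Fin d)} {r r' : R} (h : Gen X k μ r)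
    (h' : Gen X k' μ' r') : Gen X (k + k') (μ + μ') (r * r') := by
  induction h with
  | one => simpa using h'
  | ltr y _ ih => rw [mul_assoc, add_assoc]; exact Gen.ltr y ih
  | @bar k _ _ w hw _ ih =>
    rw [mul_assoc, add_assoc (dg w), show k + 1 + k' = k + k' + 1 by ring]; exact Gen.bar w hw ih

theorem GG.mul {k k' : ℕ} {μ μ' : Multiset (Fin d)} {r r' : R} (h : r ∈ GG X k μ)
    (h' : r' ∈ GG X k' μ') : r * r' ∈ GG X (k + k') (μ + μ') := by
  induction h using AddSubgroup.closure_induction with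
  | mem x hx =>
    induction h' using AddSubgroup.closure_induction with
    | mem y hy => exact AddSubgroup.subset_closure (Gen.mul hx hy)
    | zero => simp
    | add a b _ _ ha hb => rw [mul_add]; exact add_mem ha hb
    | neg a _ ha => rw [mul_neg]; exact neg_mem ha
  | zero => simp
  | add a b _ _ ha hb => rw [add_mul]; exact add_mem ha hb
  | neg a _ ha => rw [neg_mul]; exact neg_mem ha

theorem GG.congr {k k' : ℕ} {μ μ' : Multiset (Fin d)} {r r' : R} (h : r ∈ GG X k μ)
    (hk : k = k') (hμ : μ = μ') (hr : r = r') : r' ∈ GG X k' μ' := by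
  subst hk hμ hr; exact h

theorem gen_vl (l : List (Ltr d)) : Gen X 0 (dg l) (vl X l) := by
  induction l with
  | nil => exact Gen.one
  | cons y l ih => rw [dg_cons, vl_cons]; exact Gen.ltr y ih

theorem mem_vl (l : List (Ltr d)) : vl X l ∈ GG X 0 (dg l) :=
  AddSubgroup.subset_closure (gen_vl l)

theorem mem_X (y : Ltr d) : X y ∈ GG X 0 {y.1} := by
  have := mem_vl (X := X) [y]
  simpa [vl, dg] using this

theorem mem_br (w : List (Ltr d)) (hw : w.length ≤ 2) : br X w ∈ GG X 1 (dg w) := by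
  have := Gen.bar w hw (Gen.one (X := X))
  rw [mul_one, add_zero] at this
  exact AddSubgroup.subset_closure this

theorem mem_comm (y z : Ltr d) : X y * X z - X z * X y ∈ GG X 1 ({y.1} + {z.1}) := by
  have h1 := mem_br (X := X) [y, z] (by simp)
  have h2 := GG.mul (mem_br (X := X) [z] (by simp)) (mem_X y)
  have h3 := GG.mul (mem_X (X := X) (z.1, !z.2)) (mem_br (X := X) [y] (by simp))
  have e1 : dg [y, z] = {y.1} + {z.1} := by simp [dg_cons, dg_nil]
  have e2 : dg [z] + {y.1} = {y.1} + {z.1} := by simp [dg_cons, dg_nil, add_comm]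
  have e3 : {z.1} + dg [y] = {y.1} + {z.1} := by simp [dg_cons, dg_nil, add_comm]
  rw [e1] at h1
  rw [e2] at h2
  have h3 : _ ∈ GG X 1 ({y.1} + {z.1}) := GG.congr h3 rfl e3 rfl
  have := sub_mem (sub_mem h1 h2) h3
  refine GG.congr this rfl rfl ?_
  simp [br, vl, tr]
  noncomm_ring

theorem mem_flip (y : Ltr d) : X y - X (y.1, !y.2) ∈ GG X 1 {y.1} := by
  have h1 := mem_br (X := X) [y] (by simp)
  refine GG.congr h1 rfl (by simp [dg_cons, dg_nil]) ?_
  simp [br, vl, tr]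

/-- normal word -/
def nf (l : List (Fin d)) : List (Ltr d) := l.map fun i => (i, false)

theorem dg_nf (l : List (Fin d)) : dg (nf l) = (l : Multiset (Fin d)) := by
  simp [dg, nf, Function.comp_def]

theorem mem_norm (l : List (Ltr d)) : vl X l - vl X (nf (l.map Prod.fst)) ∈ GG X 1 (dg l) := by
  induction l with
  | nil => simp [nf]
  | cons y l ih =>
    have hy : X y - X (y.1, false) ∈ GG X 1 {y.1} := by
      rcases y with ⟨i, b⟩
      cases b
      · simp
      · exact mem_flip (X := X) (i, true)
    have a1 := GG.mul hy (mem_vl l)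
    have a2 := GG.mul (mem_X (X := X) (y.1, false)) ih
    have a2 : _ ∈ GG X 1 ({y.1} + dg l) := GG.congr a2 rfl rfl rfl
    refine GG.congr (add_mem a1 a2) rfl (dg_cons y l).symm ?_
    simp [nf, vl_cons]
    noncomm_ring

theorem mem_perm {l m : List (Fin d)} (h : l.Perm m) :
    vl X (nf l) - vl X (nf m) ∈ GG X 1 (l : Multiset (Fin d)) := by
  induction h with
  | nil => simp
  | @cons x l m h ih =>
    refine GG.congr (GG.mul (mem_X (X := X) (x, false)) ih) rfl rfl ?_
    simp [nf, vl_cons]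
    noncomm_ring
  | swap x y l =>
    have := GG.mul (mem_comm (X := X) (y, false) (x, false)) (mem_vl (nf l))
    refine GG.congr this rfl (by rw [dg_nf]; rfl) ?_
    simp [nf, vl_cons]
    noncomm_ring
  | @trans l m n h1 h2 ih1 ih2 =>
    rw [← Multiset.coe_eq_coe.2 h1] at ih2
    refine GG.congr (add_mem ih1 ih2) rfl rfl ?_
    abel

theorem mem_dg {l m : List (Ltr d)} (h : dg l = dg m) : vl X l - vl X m ∈ GG X 1 (dg l) := by
  have h1 := mem_norm (X := X) l
  have h2 := mem_norm (X := X) m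
  have h3 := mem_perm (X := X) (Multiset.coe_eq_coe.1 h)
  rw [← h] at h2
  refine GG.congr (sub_mem (add_mem h1 h3) h2) rfl rfl ?_
  abel

/-- the hypotheses -/
structure Hyp (X : Ltr d → R) : Prop where
  h3 : (3 : R) = 0
  hc : ∀ y, X y * X y * X y = 0
  hn : ∀ y m, X y * X y * m + X y * m * X y + m * X y * X y = 0
  hl : ∀ y z m, X y * X z * m + X z * X y * m + X y * m * X z + X z * m * X y + m * X y * X z
    + m * X z * X y = 0
  hT : ∀ a b c, vl X a * br X b * br X c + br X b * vl X (tr a) * br X c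
    + br X b * br X c * vl X a = 0

theorem Hyp.flip (H : Hyp X) (y : Ltr d) (m : R) : X y * m * X y * X y = - (X y * X y * m * X y) := by
  have h := congrArg (X y * ·) (H.hn y m)
  have h2 := congrArg (· * m) (H.hc y)
  simp only [mul_add, mul_zero, zero_mul, ← mul_assoc] at h h2
  rw [h2, zero_add] at h
  exact eq_neg_of_add_eq_zero_right h

theorem Hyp.mid (H : Hyp X) (a b c : List (Ltr d)) : br X b * vl X a * br X c =
    - (vl X (tr a) * br X b * br X c) - br X b * br X c * vl X (tr a) := by
  have := H.hT (tr a) b c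
  rw [tr_tr] at this
  rw [← sub_eq_zero, ← this]; abel

theorem Hyp.rgt (H : Hyp X) (a b c : List (Ltr d)) : br X b * br X c * vl X a =
    - (vl X a * br X b * br X c) - br X b * vl X (tr a) * br X c := by
  have := H.hT a b c
  rw [← sub_eq_zero, ← this]; abel

/-- four bars -/
theorem Hyp.skew (H : Hyp X) (a b c : List (Ltr d)) : br X a * br X b * br X c
    - br X b * br X a * br X c + br X b * br X c * br X a = 0 := by
  have h1 := H.hT a b c
  have h2 := H.hT (tr a) b c
  rw [tr_tr] at h2
  have e : br X a = vl X a - vl X (tr a) := rfl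
  rw [e, ← sub_zero (0 : R)]
  nth_rewrite 1 [← h1]
  rw [← h2]
  noncomm_ring

theorem Hyp.rev (H : Hyp X) (a b c : List (Ltr d)) : br X a * br X b * br X c
    = - (br X c * br X b * br X a) := by
  have h1 := H.skew b a c
  have h2 := H.skew a b c
  have := congrArg₂ (· + ·) h1 h2
  simp only [add_zero] at this
  have h : br X a * br X c * br X b + br X b * br X c * br X a = 0 := by
    rw [← this]; abel
  have h1 := H.skew c a b
  have h2 := H.skew a c b
  rw [← sub_eq_zero]
  have := congrArg₂ (· + ·) h1 h2
  simp only [add_zero] at this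
  rw [← this]; abel

theorem Hyp.symT (H : Hyp X) (a b c e : List (Ltr d)) : br X a * br X b * br X c * br X e
    + br X c * br X b * br X a * br X e + br X c * br X e * br X a * br X b = 0 := by
  have h1 := H.hT (a ++ b) c e
  have h2 := H.hT (tr a ++ b) c e
  have h3 := H.hT (a ++ tr b) c e
  have h4 := H.hT (tr a ++ tr b) c e
  simp only [tr_append, tr_tr, vl_append] at h1 h2 h3 h4
  have ea : br X a = vl X a - vl X (tr a) := rfl
  have eb : br X b = vl X b - vl X (tr b) := rfl
  rw [ea, eb]
  linear_combination (norm := noncomm_ring) h1 - h2 - h3 + h4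

theorem Hyp.four (H : Hyp X) (a b c e : List (Ltr d)) :
    br X a * br X b * br X c * br X e = 0 := by
  have h := H.symT c e a b
  rw [H.rev c e a] at h
  have : br X a * br X e * br X c * br X b + br X c * br X e * br X a * br X b = 0 := by
    rw [H.rev a e c]; noncomm_ring
  rw [← h, ← sub_eq_zero]
  noncomm_ring


theorem Hyp.four1 (H : Hyp X) (u a b c e : List (Ltr d)) :
    br X a * vl X u * br X b * br X c * br X e = - (br X a * br X b * vl X (tr u) * br X c * br X e) := by
  have h := H.mid u a b
  have h4 := H.four a b c e
  rw [h]
  linear_combination (norm := noncomm_ring) - vl X (tr u) * h4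

theorem Hyp.four3 (H : Hyp X) (u a b c e : List (Ltr d)) :
    br X a * br X b * br X c * vl X u * br X e = - (br X a * br X b * vl X (tr u) * br X c * br X e) := by
  have h := H.mid u c e
  have h4 := H.four a b c e
  linear_combination (norm := noncomm_ring) (br X a * br X b) * h - h4 * vl X (tr u)

theorem Hyp.four2 (H : Hyp X) (u a b c e : List (Ltr d)) :
    br X a * br X b * vl X u * br X c * br X e = 0 := by
  have h := H.mid u b c
  have h1 := H.four1 (tr u) a b c e
  have h2 := H.four3 (tr u) a b c e
  rw [tr_tr] at h1 h2
  have e1 : br X a * br X b * vl X u * br X c * br X e =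
     br X a * br X b * vl X u * br X c * br X e + br X a * br X b * vl X u * br X c * br X e := by
    linear_combination (norm := noncomm_ring) br X a * h * br X e - h1 - h2
  simpa using e1

theorem Hyp.four12 (H : Hyp X) (u v a b c e : List (Ltr d)) :
    br X a * vl X u * br X b * vl X v * br X c * br X e = 0 := by
  have h := H.mid u a b
  have h1 := H.four2 v a b c e
  have h2 := H.four2 (tr u ++ v) a b c e
  rw [vl_append] at h2
  linear_combination (norm := noncomm_ring) h * vl X v * br X c * br X e - vl X (tr u) * h1 - h2

theorem Hyp.four123 (H : Hyp X) (u v w a b c e : List (Ltr d)) :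
    br X a * vl X u * br X b * vl X v * br X c * vl X w * br X e = 0 := by
  have h := H.mid w c e
  have h1 := H.four12 u v a b c e
  have h2 := H.four12 u (v ++ tr w) a b c e
  rw [vl_append] at h2
  linear_combination (norm := noncomm_ring) br X a * vl X u * br X b * vl X v * h - h1 * vl X (tr w) - h2

theorem Gen.zero_inv {k : ℕ} {μ : Multiset (Fin d)} {r : R} (h : Gen X k μ r) (hk : k = 0) :
    ∃ l, r = vl X l ∧ μ = dg l := by
  induction h with
  | one => exact ⟨[], by simp [vl_nil, dg_nil]⟩
  | ltr y _ ih =>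
    obtain ⟨l, rfl, rfl⟩ := ih hk
    exact ⟨y :: l, by simp [vl_cons, dg_cons]⟩
  | bar w hw h ih => omega

theorem Gen.succ_inv {k : ℕ} {μ : Multiset (Fin d)} {r : R} (h : Gen X k μ r) :
    ∀ n, k = n + 1 → ∃ l b μ' r', b.length ≤ 2 ∧ Gen X n μ' r' ∧
      r = vl X l * br X b * r' ∧ μ = dg l + dg b + μ' := by
  induction h with
  | one => intro n hn; omega
  | ltr y _ ih =>
    intro n hn
    obtain ⟨l, b, μ', r', hb, hg, rfl, rfl⟩ := ih n hn
    exact ⟨y :: l, b, μ', r', hb, hg, by simp [vl_cons, mul_assoc], by simp [dg_cons, add_assoc]⟩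
  | @bar k μ r w hw h ih =>
    intro n hn
    obtain rfl : k = n := by omega
    exact ⟨[], w, μ, r, hw, h, by simp [vl_nil], by simp [dg_nil]⟩

theorem Hyp.GG4 (H : Hyp X) (μ : Multiset (Fin d)) {r : R} (hr : r ∈ GG X 4 μ) : r = 0 := by
  induction hr using AddSubgroup.closure_induction with
  | mem r h =>
    obtain ⟨l0, b1, μ1, r1, -, h1, rfl, -⟩ := Gen.succ_inv h 3 rfl
    obtain ⟨l1, b2, μ2, r2, -, h2, rfl, -⟩ := Gen.succ_inv h1 2 rfl
    obtain ⟨l2, b3, μ3, r3, -, h3, rfl, -⟩ := Gen.succ_inv h2 1 rfl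
    obtain ⟨l3, b4, μ4, r, -, h4, rfl, -⟩ := Gen.succ_inv h3 0 rfl
    have := H.four123 l1 l2 l3 b1 b2 b3 b4
    linear_combination (norm := noncomm_ring) vl X l0 * this * r
  | zero => rfl
  | add a b _ _ ha hb => simp [ha, hb]
  | neg a _ ha => simp [ha]

/-- move everything to the left of the last bar -/
theorem Hyp.left (H : Hyp X) (G : AddSubgroup R) (r s : R) (a b u w : List (Ltr d))
    (h : ∀ p q, dg p + dg q = dg u + dg w → r * vl X p * br X a * vl X q * br X b * s ∈ G) :
    r * br X a * vl X u * br X b * vl X w * s ∈ G := by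
  have h1 := h (tr u ++ w) [] (by simp [dg_append, dg_nil, dg_tr])
  have h2 := h (tr u) (tr w) (by simp [dg_tr])
  have h4 := h [] (tr (tr u ++ w)) (by simp [dg_append, dg_nil, dg_tr])
  have e1 := H.mid u a b
  have e2 := H.rgt w a b
  have e3 := H.rgt (tr u ++ w) a b
  have := add_mem (add_mem h1 h2) (add_mem h1 h4)
  rw [show r * br X a * vl X u * br X b * vl X w * s =
    r * vl X (tr u ++ w) * br X a * vl X [] * br X b * s +
    r * vl X (tr u) * br X a * vl X (tr w) * br X b * s +
    (r * vl X (tr u ++ w) * br X a * vl X [] * br X b * s +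
    r * vl X [] * br X a * vl X (tr (tr u ++ w)) * br X b * s) from ?_]
  · exact this
  · rw [vl_append] at e3 ⊢
    rw [vl_nil]
    linear_combination (norm := noncomm_ring) r * e1 * vl X w * s - r * vl X (tr u) * e2 * s
      - r * e3 * s

theorem two_split (μ ν : Multiset (Fin d)) (y : Fin d) (h : 3 ≤ Multiset.count y (μ + ν)) :
    ∃ a a', a + a' = 3 ∧ a ≤ Multiset.count y μ ∧ a' ≤ Multiset.count y ν := by
  rw [Multiset.count_add] at h
  refine ⟨min 3 (Multiset.count y μ), 3 - min 3 (Multiset.count y μ), ?_, ?_, ?_⟩ <;> omega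

/-- powers as words -/
def pw (y : Fin d) (a : ℕ) : List (Ltr d) := List.replicate a (y, false)

theorem dg_pw (y : Fin d) (a : ℕ) : dg (pw y a) = Multiset.replicate a y := by
  simp [dg, pw, ← Multiset.coe_replicate]

theorem vl_pw (y : Fin d) (a : ℕ) : vl X (pw y a) = X (y, false) ^ a := by
  simp [vl, pw]

theorem exists_rest (l : List (Ltr d)) (y z : Fin d) (hyz : y ≠ z) (a b : ℕ)
    (ha : a ≤ Multiset.count y (dg l)) (hb : b ≤ Multiset.count z (dg l)) :
    ∃ m : List (Ltr d), dg l = dg m + Multiset.replicate a y + Multiset.replicate b z := by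
  have hle : Multiset.replicate a y + Multiset.replicate b z ≤ dg l := by
    rw [Multiset.le_iff_count]
    intro i
    simp only [Multiset.count_add, Multiset.count_replicate]
    by_cases h1 : y = i
    · subst h1
      simp [hyz.symm, ha]
    · by_cases h2 : z = i
      · subst h2; simp [hyz, hb]
      · simp [h1, h2]
  obtain ⟨ρ, hρ⟩ := Multiset.le_iff_exists_add.1 hle
  refine ⟨nf ρ.toList, ?_⟩
  rw [dg_nf, Multiset.coe_toList, hρ]
  abel

theorem Hyp.core (H : Hyp X) (y z : Fin d) (b : List (Ltr d)) (hb : b.length ≤ 2) :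
    X (y, false) * X (y, false) * X (z, false) * X (z, false) * br X b * X (z, false) * X (y, false)
      ∈ GG X 2 (dg b + Multiset.replicate 3 y + Multiset.replicate 3 z) := by
  set Y := X (y, false) with hY
  set Z := X (z, false) with hZ
  set B := br X b
  set μ := dg b + Multiset.replicate 3 y + Multiset.replicate 3 z with hμ
  have hB : B ∈ GG X 1 (dg b) := mem_br b hb
  have rep3 : ∀ i : Fin d, Multiset.replicate 3 i = {i} + {i} + {i} := fun i => rfl
  -- commuting on the left
  have L : ∀ p q s : List (Ltr d), dg p = dg q → dg p + dg b + dg s = μ →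
      vl X p * B * vl X s - vl X q * B * vl X s ∈ GG X 2 μ := by
    intro p q s h1 h2
    refine GG.congr (GG.mul (GG.mul (mem_dg (X := X) h1) hB) (mem_vl s)) rfl h2 ?_
    noncomm_ring
  have Rr : ∀ p q s : List (Ltr d), dg p = dg q → dg s + dg b + dg p = μ →
      vl X s * B * vl X p - vl X s * B * vl X q ∈ GG X 2 μ := by
    intro p q s h1 h2
    refine GG.congr (GG.mul (GG.mul (mem_vl s) hB) (mem_dg (X := X) h1)) rfl h2 ?_
    noncomm_ring
  let y' : Ltr d := (y, false)
  let z' : Ltr d := (z, false)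
  have m1 := L [y', y', z', y', z'] [y', y', y', z', z'] [z'] (by simp only [dg_cons, dg_nil, y', z']; abel)
    (by simp only [dg_cons, dg_nil, y', z', hμ, rep3]; abel)
  have m2 := L [y', y', z', z', y'] [y', y', y', z', z'] [z'] (by simp only [dg_cons, dg_nil, y', z']; abel)
    (by simp only [dg_cons, dg_nil, y', z', hμ, rep3]; abel)
  have m3 := L [y', y', z', y'] [y', y', y', z'] [z', z'] (by simp only [dg_cons, dg_nil, y', z']; abel)
    (by simp only [dg_cons, dg_nil, y', z', hμ, rep3]; abel)
  have m4 := Rr [z', y', z'] [y', z', z'] [y', y', z'] (by simp only [dg_cons, dg_nil, y', z']; abel)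
    (by simp only [dg_cons, dg_nil, y', z', hμ, rep3]; abel)
  have m5 := Rr [z', y'] [y', z'] [y', y', z', z'] (by simp only [dg_cons, dg_nil, y', z']; abel)
    (by simp only [dg_cons, dg_nil, y', z', hμ, rep3]; abel)
  simp only [vl_cons, vl_nil, mul_one, ← hY, ← hZ, y', z'] at m1 m2 m3 m4 m5
  have hl := H.hl (y, false) (z, false) B
  have hc := H.hc (y, false)
  have hf := H.flip (z, false) (B * Y)
  rw [← hY] at hc hl
  rw [← hZ] at hf hl
  have := add_mem (add_mem (add_mem (add_mem m1 m2) m3) m4) m5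
  refine GG.congr this rfl rfl ?_
  linear_combination (norm := noncomm_ring) Y * Y * Z * hl * Z - 2 * hc * Z * Z * B * Z - hc * Z * B * Z * Z
     - 2 * Y * Y * hf

theorem Hyp.KL (H : Hyp X) (y z : Fin d) (hyz : y ≠ z) (b v u : List (Ltr d)) (hb : b.length ≤ 2)
    (hy : 3 ≤ Multiset.count y (dg v + dg u)) (hz : 3 ≤ Multiset.count z (dg v + dg u)) :
    vl X v * br X b * vl X u ∈ GG X 2 (dg v + dg b + dg u) := by
  obtain ⟨a, a', haa, ha, ha'⟩ := two_split _ _ y hy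
  obtain ⟨c, c', hcc, hc, hc'⟩ := two_split _ _ z hz
  obtain ⟨v0, hv⟩ := exists_rest v y z hyz a c ha hc
  obtain ⟨u0, hu⟩ := exists_rest u y z hyz a' c' ha' hc'
  have hB : br X b ∈ GG X 1 (dg b) := mem_br b hb
  have ev : dg v = dg (v0 ++ pw y a ++ pw z c) := by rw [hv, dg_append, dg_append, dg_pw, dg_pw]
  have eu : dg u = dg (pw z c' ++ pw y a' ++ u0) := by
    rw [hu, dg_append, dg_append, dg_pw, dg_pw]; abel
  have h1 := GG.mul (GG.mul (mem_dg (X := X) ev) hB) (mem_vl u)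
  have h2 := GG.mul (GG.mul (mem_vl (X := X) (v0 ++ pw y a ++ pw z c)) hB) (mem_dg (X := X) eu)
  rw [← ev] at h2
  have h3 : X (y, false) ^ a * X (z, false) ^ c * br X b * (X (z, false) ^ c' * X (y, false) ^ a') ∈
      GG X 2 (dg b + Multiset.replicate 3 y + Multiset.replicate 3 z) := by
    have hcore := H.core y z b hb
    have cy := H.hc (y, false)
    have cz := H.hc (z, false)
    have cy : X (y, false) ^ 3 = 0 := by rw [← cy]; noncomm_ring
    have cz : X (z, false) ^ 3 = 0 := by rw [← cz]; noncomm_ring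
    have fz := H.flip (z, false) (br X b)
    have f1 := H.flip (y, false) (X (z, false) * X (z, false) * br X b * X (z, false))
    have a3 : a ≤ 3 := by omega
    have c3 : c ≤ 3 := by omega
    obtain rfl : a' = 3 - a := by omega
    obtain rfl : c' = 3 - c := by omega
    clear h1 h2 ev eu hv hu ha ha' hc hc' haa hcc
    interval_cases a <;> interval_cases c <;> simp only [Nat.reduceSub] <;>
      try (simp [cy, cz]; done)
    · refine GG.congr hcore rfl rfl ?_
      linear_combination (norm := noncomm_ring) f1 - X (y, false) * fz * X (y, false) * X (y, false)
    · refine GG.congr (neg_mem hcore) rfl rfl ?_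
      linear_combination (norm := noncomm_ring) - f1
    · refine GG.congr (neg_mem hcore) rfl rfl ?_
      linear_combination (norm := noncomm_ring) - X (y, false) * X (y, false) * fz * X (y, false)
    · refine GG.congr hcore rfl rfl ?_
      noncomm_ring
  have h4 := GG.mul (GG.mul (mem_vl (X := X) v0) h3) (mem_vl (X := X) u0)
  have eμ : dg v0 + (dg b + Multiset.replicate 3 y + Multiset.replicate 3 z) + dg u0
      = dg v + dg b + dg u := by
    have ry : Multiset.replicate 3 y = Multiset.replicate a y + Multiset.replicate a' y := by
      rw [← Multiset.replicate_add, haa]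
    have rz : Multiset.replicate 3 z = Multiset.replicate c z + Multiset.replicate c' z := by
      rw [← Multiset.replicate_add, hcc]
    rw [hv, hu, ry, rz]
    abel
  have h4 : _ ∈ GG X 2 (dg v + dg b + dg u) := GG.congr h4 rfl eμ rfl
  have h1 : _ ∈ GG X 2 (dg v + dg b + dg u) := GG.congr h1 rfl rfl rfl
  have h2 : _ ∈ GG X 2 (dg v + dg b + dg u) := GG.congr h2 rfl rfl rfl
  refine GG.congr (add_mem (add_mem h1 h2) h4) rfl rfl ?_
  simp only [vl_append, vl_pw]
  noncomm_ring



theorem card_dg (l : List (Ltr d)) : Multiset.card (dg l) = l.length := by simp [dg]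

theorem pigeon (S : Finset (Fin d)) (hS : 8 ≤ S.card) (β : Multiset (Fin d))
    (hβ : Multiset.card β ≤ 6) : ∃ y ∈ S, ∃ z ∈ S, y ≠ z ∧ Multiset.count y β = 0 ∧
      Multiset.count z β = 0 := by
  have h1 : β.toFinset.card ≤ 6 := (Multiset.toFinset_card_le β).trans hβ
  have h2 := Finset.le_card_sdiff β.toFinset S
  have h3 : 1 < (S \ β.toFinset).card := by omega
  obtain ⟨y, hy, z, hz, hyz⟩ := Finset.one_lt_card.1 h3
  simp only [Finset.mem_sdiff, Multiset.mem_toFinset] at hy hz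
  exact ⟨y, hy.1, z, hz.1, hyz, Multiset.count_eq_zero.2 hy.2, Multiset.count_eq_zero.2 hz.2⟩

theorem Hyp.step (H : Hyp X) (S : Finset (Fin d)) (hS : 8 ≤ S.card) (μ : Multiset (Fin d))
    (hμ : ∀ i ∈ S, 3 ≤ Multiset.count i μ) (k : ℕ) (hk : k ≤ 3) {r : R} (hr : r ∈ GG X k μ) :
    r ∈ GG X (k + 1) μ := by
  refine (AddSubgroup.closure_le (K := GG X (k + 1) μ)).2 ?_ hr
  intro r h
  change Gen X k μ r at h
  change r ∈ GG X (k + 1) μ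
  interval_cases k
  · obtain ⟨l, rfl, rfl⟩ := Gen.zero_inv h rfl
    obtain ⟨y, hy, z, hz, hyz, -, -⟩ := pigeon S hS 0 (by simp)
    obtain ⟨m, hm⟩ := exists_rest l y z hyz 3 0 (hμ y hy) (by simp)
    have e : dg l = dg (m ++ pw y 3) := by rw [hm, dg_append, dg_pw]; simp
    refine GG.congr (mem_dg (X := X) e) rfl rfl ?_
    have := H.hc (y, false)
    rw [vl_append, vl_pw]
    linear_combination (norm := noncomm_ring) - vl X m * this
  · obtain ⟨l0, b1, μ1, r1, hb1, h1, rfl, rfl⟩ := Gen.succ_inv h 0 rfl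
    obtain ⟨l1, rfl, rfl⟩ := Gen.zero_inv h1 rfl
    obtain ⟨y, hy, z, hz, hyz, hy0, hz0⟩ := pigeon S hS (dg b1) (by rw [card_dg]; omega)
    have hy := hμ y hy
    have hz := hμ z hz
    simp only [Multiset.count_add] at hy hz
    exact H.KL y z hyz b1 l0 l1 hb1 (by simp only [Multiset.count_add]; omega)
      (by simp only [Multiset.count_add]; omega)
  · obtain ⟨l0, b1, μ1, r1, hb1, h1, rfl, rfl⟩ := Gen.succ_inv h 1 rfl
    obtain ⟨l1, b2, μ2, r2, hb2, h2, rfl, rfl⟩ := Gen.succ_inv h1 0 rfl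
    obtain ⟨l2, rfl, rfl⟩ := Gen.zero_inv h2 rfl
    obtain ⟨y, hy, z, hz, hyz, hy0, hz0⟩ := pigeon S hS (dg b1 + dg b2)
      (by rw [Multiset.card_add, card_dg, card_dg]; omega)
    have hy := hμ y hy
    have hz := hμ z hz
    simp only [Multiset.count_add] at hy hz hy0 hz0
    have := H.left (GG X 3 (dg l0 + dg b1 + (dg l1 + dg b2 + dg l2))) (vl X l0) 1 b1 b2 l1 l2 ?_
    · refine GG.congr this rfl rfl ?_
      noncomm_ring
    · intro p q hpq
      have cy := congrArg (Multiset.count y) hpq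
      have cz := congrArg (Multiset.count z) hpq
      simp only [Multiset.count_add] at cy cz
      have := H.KL y z hyz b1 (l0 ++ p) q hb1
        (by simp only [dg_append, Multiset.count_add]; omega)
        (by simp only [dg_append, Multiset.count_add]; omega)
      refine GG.congr (GG.mul this (mem_br b2 hb2)) rfl ?_ ?_
      · rw [dg_append]
        calc _ = dg l0 + dg b1 + dg b2 + (dg p + dg q) := by abel
          _ = _ := by rw [hpq]; abel
      · rw [vl_append]; noncomm_ring
  · obtain ⟨l0, b1, μ1, r1, hb1, h1, rfl, rfl⟩ := Gen.succ_inv h 2 rfl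
    obtain ⟨l1, b2, μ2, r2, hb2, h2, rfl, rfl⟩ := Gen.succ_inv h1 1 rfl
    obtain ⟨l2, b3, μ3, r3, hb3, h3, rfl, rfl⟩ := Gen.succ_inv h2 0 rfl
    obtain ⟨l3, rfl, rfl⟩ := Gen.zero_inv h3 rfl
    obtain ⟨y, hy, z, hz, hyz, hy0, hz0⟩ := pigeon S hS (dg b1 + dg b2 + dg b3)
      (by rw [Multiset.card_add, Multiset.card_add, card_dg, card_dg, card_dg]; omega)
    have hy := hμ y hy
    have hz := hμ z hz
    simp only [Multiset.count_add] at hy hz hy0 hz0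
    have := H.left (GG X 4 (dg l0 + dg b1 + (dg l1 + dg b2 + (dg l2 + dg b3 + dg l3))))
      (vl X l0 * br X b1 * vl X l1) 1 b2 b3 l2 l3 ?_
    · refine GG.congr this rfl rfl ?_
      noncomm_ring
    · intro p q hpq
      have := H.left (GG X 4 (dg l0 + dg b1 + (dg l1 + dg b2 + (dg l2 + dg b3 + dg l3))))
        (vl X l0) (br X b3) b1 b2 (l1 ++ p) q ?_
      · refine GG.congr this rfl rfl ?_
        rw [vl_append]; noncomm_ring
      · intro p' q' hpq'
        rw [dg_append] at hpq'
        have cy := congrArg (Multiset.count y) hpq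
        have cz := congrArg (Multiset.count z) hpq
        have cy' := congrArg (Multiset.count y) hpq'
        have cz' := congrArg (Multiset.count z) hpq'
        simp only [Multiset.count_add] at cy cz cy' cz'
        have := H.KL y z hyz b1 (l0 ++ p') q' hb1
          (by simp only [dg_append, Multiset.count_add]; omega)
          (by simp only [dg_append, Multiset.count_add]; omega)
        refine GG.congr (GG.mul (GG.mul this (mem_br b2 hb2)) (mem_br b3 hb3)) rfl ?_ ?_
        · rw [dg_append]
          calc _ = dg l0 + dg b1 + dg b2 + dg b3 + (dg p' + dg q') := by abel
            _ = dg l0 + dg b1 + dg b2 + dg b3 + dg l1 + (dg p + dg q) := by rw [hpq']; abel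
            _ = _ := by rw [hpq]; abel
        · simp only [vl_append, mul_assoc]

theorem Hyp.main (H : Hyp X) (S : Finset (Fin d)) (hS : 8 ≤ S.card) (l : List (Ltr d))
    (hμ : ∀ i ∈ S, 3 ≤ Multiset.count i (dg l)) : vl X l = 0 :=
  H.GG4 (dg l) (H.step S hS _ hμ 3 (by omega) (H.step S hS _ hμ 2 (by omega)
    (H.step S hS _ hμ 1 (by omega) (H.step S hS _ hμ 0 (by omega) (mem_vl l)))))

end Abstract

section Concrete

variable {F : Type} [Field F] {d : ℕ}

theorem wordOf_append (l m : List (Ltr d)) :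
    wordOf F d (l ++ m) = wordOf F d l * wordOf F d m := by simp [wordOf]

theorem tp_wordOf (l : List (Ltr d)) : tp F d (wordOf F d l) = wordOf F d (tr l) := by
  induction l with
  | nil => simp [tp, wordOf, tr]
  | cons y l ih =>
    have : wordOf F d (y :: l) = FreeAlgebra.ι F y * wordOf F d l := by simp [wordOf]
    rw [this]
    have e : tr (y :: l) = tr l ++ [(y.1, !y.2)] := by simp [tr]
    rw [e, wordOf_append, ← ih]
    simp [tp, wordOf]

theorem tp_add (a b : FA F d) : tp F d (a + b) = tp F d a + tp F d b := by simp [tp]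

theorem mem_MF (l : List (Ltr d)) (hl : l ≠ []) : wordOf F d l ∈ MFsub F d :=
  Submodule.subset_span ⟨l, hl, rfl⟩

theorem MF_mul {a b : FA F d} (ha : a ∈ MFsub F d) (hb : b ∈ MFsub F d) :
    a * b ∈ MFsub F d := by
  have : a * b ∈ MFsub F d * MFsub F d := Submodule.mul_mem_mul ha hb
  refine (?_ : MFsub F d * MFsub F d ≤ MFsub F d) this
  unfold MFsub
  rw [Submodule.span_mul_span, Submodule.span_le]
  rintro _ ⟨_, ⟨l, hl, rfl⟩, _, ⟨m, hm, rfl⟩, rfl⟩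
  exact Submodule.subset_span ⟨l ++ m, by simp [hl], (wordOf_append l m).symm⟩

theorem exists_MF (a : FA F d) : ∃ c : F, ∃ b ∈ MFsub F d, a = algebraMap F _ c + b := by
  induction a using FreeAlgebra.induction with
  | grade0 r => exact ⟨r, 0, zero_mem _, by simp⟩
  | grade1 x => exact ⟨0, FreeAlgebra.ι F x, by
      have := mem_MF (F := F) [x] (by simp)
      simpa [wordOf] using this, by simp⟩
  | mul a b ha hb =>
    obtain ⟨c, a, ha, rfl⟩ := ha
    obtain ⟨e, b, hb, rfl⟩ := hb
    refine ⟨c * e, c • b + e • a + a * b, add_mem (add_mem (Submodule.smul_mem _ _ hb)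
      (Submodule.smul_mem _ _ ha)) (MF_mul ha hb), ?_⟩
    rw [Algebra.smul_def, Algebra.smul_def, map_mul, mul_add, add_mul, add_mul,
      Algebra.commutes e a]
    abel
  | add a b ha hb =>
    obtain ⟨c, a, ha, rfl⟩ := ha
    obtain ⟨e, b, hb, rfl⟩ := hb
    exact ⟨c + e, a + b, add_mem ha hb, by rw [map_add]; abel⟩

/-- the quotient map -/
abbrev qm : FA F d →+* (idealA F d).ringCon.Quotient := (idealA F d).ringCon.mk'

theorem qm_eq_zero {a : FA F d} : qm a = 0 ↔ a ∈ idealA F d := by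
  rw [TwoSidedIdeal.mem_iff, ← RingCon.eq]
  rfl

theorem qm_cube {a : FA F d} (ha : a ∈ MFsub F d) : qm a ^ 3 = 0 := by
  rw [← map_pow, qm_eq_zero]
  exact TwoSidedIdeal.subset_span (Or.inl ⟨a, ha, rfl⟩)

theorem qm_T {a b c : FA F d} (ha : a ∈ MFsub F d) (hb : b ∈ MFsub F d) (hc : c ∈ MFsub F d) :
    qm (Trel F d a b c) = 0 := by
  rw [qm_eq_zero]
  exact TwoSidedIdeal.subset_span (Or.inr ⟨a, ha, b, hb, c, hc, rfl⟩)

theorem qm_three [CharP F 3] : (3 : (idealA F d).ringCon.Quotient) = 0 := by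
  have h : (3 : F) = 0 := by exact_mod_cast CharP.cast_eq_zero F 3
  have : qm (algebraMap F (FA F d) 3) = 0 := by rw [h, map_zero, map_zero]
  rwa [map_ofNat, map_ofNat] at this

theorem qm_nil [CharP F 3] {a : FA F d} (ha : a ∈ MFsub F d) (m : FA F d) :
    qm a * qm a * qm m + qm a * qm m * qm a + qm m * qm a * qm a = 0 := by
  obtain ⟨c, b, hb, rfl⟩ := exists_MF m
  have h1 := qm_cube (add_mem hb ha)
  have h2 := qm_cube (sub_mem hb ha)
  have h3 := qm_cube hb
  have h4 := qm_three (F := F) (d := d)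
  have hcom : qm (algebraMap F _ c) * qm a = qm a * qm (algebraMap F _ c) := by
    rw [← map_mul, ← map_mul, Algebra.commutes]
  rw [map_add] at h1
  rw [map_sub] at h2
  rw [map_add]
  generalize qm (algebraMap F (FA F d) c) = C at *
  generalize qm a = A at *
  generalize qm b = B at *
  have k1 : A * A * C * 3 = 0 := by rw [h4, mul_zero]
  have k2 : (A * A * B + A * B * A + B * A * A) * 3 = 0 := by rw [h4, mul_zero]
  linear_combination (norm := noncomm_ring) k1 + k2 - h1 - h2 + 2 * h3 + A * hcom + hcom * A + A * hcom

theorem hyp_qm [CharP F 3] : Hyp (fun y : Ltr d => qm (FreeAlgebra.ι F y)) := by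
  have hv : ∀ l : List (Ltr d), vl (fun y : Ltr d => qm (FreeAlgebra.ι F y)) l
      = qm (wordOf F d l) := by
    intro l
    simp [vl, wordOf, map_list_prod, Function.comp_def]
  have hbr : ∀ l : List (Ltr d), br (fun y : Ltr d => qm (FreeAlgebra.ι F y)) l
      = qm (bar F d (wordOf F d l)) := by
    intro l
    rw [br, hv, hv, bar, tp_wordOf, map_sub]
  have hM : ∀ y : Ltr d, FreeAlgebra.ι F y ∈ MFsub F d := by
    intro y
    have := mem_MF (F := F) [y] (by simp)
    simpa [wordOf] using this
  have h3 := qm_three (F := F) (d := d)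
  have hsur : Function.Surjective (qm : FA F d →+* _) := RingCon.mk'_surjective _
  refine ⟨h3, ?_, ?_, ?_, ?_⟩
  · intro y
    have := qm_cube (hM y)
    rw [pow_three'] at this
    exact this
  · intro y m
    obtain ⟨m, rfl⟩ := hsur m
    exact qm_nil (hM y) m
  · intro y z m
    obtain ⟨m, rfl⟩ := hsur m
    have h1 := qm_nil (add_mem (hM y) (hM z)) m
    have h2 := qm_nil (hM y) m
    have h3 := qm_nil (hM z) m
    rw [map_add] at h1
    linear_combination (norm := noncomm_ring) h1 - h2 - h3
  · intro a b c
    by_cases hb : b = []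
    · subst hb; simp [br, tr]
    by_cases hc : c = []
    · subst hc; simp [br, tr]
    by_cases ha : a = []
    · subst ha
      simp only [tr, List.map_nil, List.reverse_nil, vl_nil, mul_one, one_mul]
      have k : ∀ x : (idealA F d).ringCon.Quotient, x + x + x = x * 3 := by
        intro x; noncomm_ring
      rw [k, h3, mul_zero]
    have := qm_T (mem_MF (F := F) a ha) (mem_MF (F := F) b hb) (mem_MF (F := F) c hc)
    rw [hv, hv, hbr, hbr, ← tp_wordOf, ← this]
    simp [Trel]

end Concrete

/-- if `char F = 3`, `d ≥ 8`, and `u` is a word with `deg_{x_i}(u) = 3` for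
`1 ≤ i ≤ 8`, then `u = 0` in `A_{3,d}`. -/
theorem stmt13 (F : Type) [Field F] [Infinite F] [CharP F 3] (d : ℕ) (hd : 8 ≤ d)
    (l : List (Ltr d)) (hl : l ≠ [])
    (hdeg : ∀ i : Fin d, (i : ℕ) < 8 → l.count ((i, false) : Ltr d) = 3) :
    wordOf F d l ∈ idealA F d := by
  have H := hyp_qm (F := F) (d := d)
  have h := H.main (Finset.univ.map (Fin.castLEEmb hd)) (by simp) l ?_
  · rw [← qm_eq_zero, ← h]
    simp [vl, wordOf, map_list_prod, Function.comp_def]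
  · intro i hi
    simp only [Finset.mem_map, Finset.mem_univ, true_and] at hi
    obtain ⟨j, rfl⟩ := hi
    have h1 := hdeg (Fin.castLEEmb hd j) (by simp)
    rw [← h1, dg, Multiset.coe_count]
    exact List.count_le_count_map (f := Prod.fst) (x := (Fin.castLEEmb hd j, false))
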